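/- There exists a unique family B : ℕ⁴ → S such that for every a ∈ ℕ⁴: (i) B[a] − E[a] ∈ Σ_{b ∈ S(a)} qℤ[q]·E[b], and (ii) σ(B[a]) = q^{−N(a)}B[a]. Moreover the family {B[a] : a ∈ ℕ⁴} is an F-basis of S (the dual canonical basis). -/

import Mathlib

noncomputable section

abbrev F : Type := RatFunc ℚ

/-- The deformation parameter `q`. -/
def qq : F := RatFunc.X

/-- The quantum integer `[3] = q² + 1 + q⁻²`. -/
def box3 : F := qq ^ 2 + 1 + (qq⁻¹) ^ 2

/-- The generators `E₁, E₂` of the free algebra. -/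
def gen (i : Fin 2) : FreeAlgebra F (Fin 2) := FreeAlgebra.ι F i

/-- The quantized Serre relations. -/
inductive SerreRel : FreeAlgebra F (Fin 2) → FreeAlgebra F (Fin 2) → Prop
  | rel1 : SerreRel
      (gen 0 ^ 3 * gen 1 - box3 • (gen 0 ^ 2 * gen 1 * gen 0)
        + box3 • (gen 0 * gen 1 * gen 0 ^ 2) - gen 1 * gen 0 ^ 3) 0
  | rel2 : SerreRel
      (gen 1 ^ 3 * gen 0 - box3 • (gen 1 ^ 2 * gen 0 * gen 1)
        + box3 • (gen 1 * gen 0 * gen 1 ^ 2) - gen 0 * gen 1 ^ 3) 0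

/-- `U = U_q(𝔫)`, the free algebra on `E₁, E₂` modulo the quantized Serre relations. -/
abbrev U : Type := RingQuot SerreRel

def E1 : U := RingQuot.mkAlgHom F SerreRel (gen 0)
def E2 : U := RingQuot.mkAlgHom F SerreRel (gen 1)

/-- `A = (1/(q+q⁻¹))(E₂E₁ − q⁻²E₁E₂)`. -/
def Aelt : U := (qq + qq⁻¹)⁻¹ • (E2 * E1 - (qq⁻¹) ^ 2 • (E1 * E2))

def v0 : U := E1
def v1 : U := Aelt * v0 - v0 * Aelt
def v2 : U := Aelt * v1 - v1 * Aelt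
def v3 : U := Aelt * v2 - v2 * Aelt

/-- `uᵢ = (1 − q⁻²)⁻²ⁱ vᵢ`. -/
def u0 : U := v0
def u1 : U := ((1 - (qq⁻¹) ^ 2)⁻¹) ^ 2 • v1
def u2 : U := ((1 - (qq⁻¹) ^ 2)⁻¹) ^ 4 • v2
def u3 : U := ((1 - (qq⁻¹) ^ 2)⁻¹) ^ 6 • v3

/-- `p₁ = u₃u₁ − q²u₂²`. -/
def p1 : U := u3 * u1 - qq ^ 2 • u2 ^ 2
/-- `p₀ = u₂u₀ − q²u₁²`. -/
def p0 : U := u2 * u0 - qq ^ 2 • u1 ^ 2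

/-- `S`, the subalgebra of `U` generated by `u₀, u₁, u₂, u₃`. -/
abbrev Sgen : Subalgebra F U := Algebra.adjoin F ({u0, u1, u2, u3} : Set U)

def us0 : Sgen := ⟨u0, Algebra.subset_adjoin (by simp)⟩
def us1 : Sgen := ⟨u1, Algebra.subset_adjoin (by simp)⟩
def us2 : Sgen := ⟨u2, Algebra.subset_adjoin (by simp)⟩
def us3 : Sgen := ⟨u3, Algebra.subset_adjoin (by simp)⟩

/-- `p₁ = u₃u₁ − q²u₂²` as an element of `S`. -/
def ps1 : Sgen := us3 * us1 - qq ^ 2 • us2 ^ 2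
/-- `p₀ = u₂u₀ − q²u₁²` as an element of `S`. -/
def ps0 : Sgen := us2 * us0 - qq ^ 2 • us1 ^ 2

/-- Index quadruples `a = (a₃, a₂, a₁, a₀)`. -/
abbrev Idx : Type := ℕ × ℕ × ℕ × ℕ

/-- The PBW monomial `u₃^{a₃}u₂^{a₂}u₁^{a₁}u₀^{a₀}`. -/
def mon (a : Idx) : Sgen := us3 ^ a.1 * us2 ^ a.2.1 * us1 ^ a.2.2.1 * us0 ^ a.2.2.2

/-- `b(a) = C(a₃,2)+C(a₂,2)+C(a₁,2)+C(a₀,2)`. -/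
def bexp (a : Idx) : ℕ :=
  Nat.choose a.1 2 + Nat.choose a.2.1 2 + Nat.choose a.2.2.1 2 + Nat.choose a.2.2.2 2

/-- The dual PBW basis element `E[a] = q^{b(a)} u₃^{a₃}u₂^{a₂}u₁^{a₁}u₀^{a₀}`. -/
def Ee (a : Idx) : Sgen := qq ^ bexp a • mon a

/-- `N(a) = (a₃+a₂+a₁+a₀)² − 7a₃ − 5a₂ − 3a₁ − a₀`. -/
def Nnum (a : Idx) : ℤ :=
  ((a.1 : ℤ) + a.2.1 + a.2.2.1 + a.2.2.2) ^ 2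
    - 7 * a.1 - 5 * a.2.1 - 3 * a.2.2.1 - a.2.2.2

/-- `a ⊴ b` iff `b − a ∈ ℕ·(−1,2,−1,0) + ℕ·(0,−1,2,−1)`. -/
def tri (a b : Idx) : Prop :=
  ∃ s r : ℕ,
    (b.1 : ℤ) = a.1 - s ∧
    (b.2.1 : ℤ) = a.2.1 + 2 * s - r ∧
    (b.2.2.1 : ℤ) = a.2.2.1 - s + 2 * r ∧
    (b.2.2.2 : ℤ) = a.2.2.2 - r

/-- `S(a) = {b ∈ ℕ⁴ : a ⊴ b and a ≠ b}`. -/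
def Sset (a : Idx) : Set Idx := {b | tri a b ∧ a ≠ b}

/-- Condition (i): `B[a] − E[a] ∈ Σ_{b ∈ S(a)} qℤ[q]·E[b]`. -/
def cond1 (B : Idx → Sgen) (a : Idx) : Prop :=
  ∃ φ : Idx →₀ Polynomial ℤ,
    (↑φ.support : Set Idx) ⊆ Sset a ∧
    B a - Ee a =
      φ.sum fun b p => (qq * Polynomial.eval₂ (Int.castRingHom F) qq p) • Ee b

/-- Hypotheses on the bar involution of coefficients `bar : q ↦ q⁻¹` and on the
anti-automorphism `σ` of `S`: `σ` is an additive, anti-multiplicative bijection with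
`σ(c(q)·x) = c(q⁻¹)·σ(x)` and `σ(uᵢ) = q^{2i}uᵢ`. -/
def SigmaHyp (bar : F →+* F) (σ : Sgen → Sgen) : Prop :=
  bar qq = qq⁻¹ ∧
  Function.Bijective σ ∧
  (∀ x y : Sgen, σ (x + y) = σ x + σ y) ∧
  (∀ x y : Sgen, σ (x * y) = σ y * σ x) ∧
  (∀ (c : F) (x : Sgen), σ (c • x) = bar c • σ x) ∧
  σ us0 = us0 ∧ σ us1 = qq ^ 2 • us1 ∧ σ us2 = qq ^ 4 • us2 ∧ σ us3 = qq ^ 6 • us3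

/-- The defining properties of the dual canonical basis `B`: for every `a ∈ ℕ⁴`,
`B[a] − E[a] ∈ Σ_{b ∈ S(a)} qℤ[q]·E[b]` and `σ(B[a]) = q^{−N(a)}B[a]`. -/
def DCB (bar : F →+* F) (σ : Sgen → Sgen) (B : Idx → Sgen) : Prop :=
  ∀ a : Idx, cond1 B a ∧ σ (B a) = qq ^ (-Nnum a) • B a

/-- Extension of `B` to integer quadruples by the convention that `B[a] = 0` whenever
some coordinate of `a` is negative. -/
def Bz (B : Idx → Sgen) (a : ℤ × ℤ × ℤ × ℤ) : Sgen :=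
  if 0 ≤ a.1 ∧ 0 ≤ a.2.1 ∧ 0 ≤ a.2.2.1 ∧ 0 ≤ a.2.2.2 then
    B (a.1.toNat, a.2.1.toNat, a.2.2.1.toNat, a.2.2.2.toNat)
  else 0

/-!
Write `ψ = q^{N(a)}σ`. This semilinear involution sends `E[b]`, for `a ⊴ b`, to `E[b]` plus a
`ℤ[q, q⁻¹]`-combination of the `E[c]` with `c ∈ S(b)`, so the theorem is an instance of Lusztig's
lemma: an anti-invariant Laurent polynomial is `g - ḡ` for some `g ∈ qℤ[q]`, and `0` is the only
invariant in `qℤ[q]`, so each `E[a]` has exactly one `ψ`-invariant `qℤ[q]`-correction.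

The triangularity of `σ` comes from the straightening relations for `uᵢuⱼ`. All of them follow from
`vᵢ₊₁vᵢ = q²vᵢvᵢ₊₁` by applying the derivation `⁅A, ·⁆`. For `i = 0` this is a Serre relation. To
pass from `i` to `i + 1`, rescale `A` to the `q`-commutator of `E₁` and `E₂`, and let `D` be the
`q`-commutator of `⁅A, E₁⁆` and `E₂`. Then `⁅D, A⁆ = 0`, so `⁅D, vᵢ⁆` is a combination of `Avᵢ₊₁`
and `vᵢ₊₂`, and applying `⁅D, ·⁆` to the `i`-th relation gives the next one.
-/

section CoeffSpan

variable {K V W ι : Type*} [CommRing K] [AddCommGroup V] [Module K V]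

/-- The additive group `Σ_{b ∈ T} M·m_b` of combinations of the `m_b`, `b ∈ T`, with
coefficients in `M`. The set `M` is not asked to be a subring, so that `M` may be `qℤ[q]`. -/
def coeffSpan (M : Set K) (m : ι → V) (T : Set ι) : AddSubgroup V :=
  AddSubgroup.closure (Set.image2 (fun c b => c • m b) M T)

variable {M M' : Set K} {m : ι → V} {T T' : Set ι} {x : V} {c : K} {b : ι}

theorem smul_mem_coeffSpan (hc : c ∈ M) (hb : b ∈ T) : c • m b ∈ coeffSpan M m T :=
  AddSubgroup.subset_closure (Set.mem_image2_of_mem hc hb)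

theorem coeffSpan_le_iff {H : AddSubgroup V} :
    coeffSpan M m T ≤ H ↔ ∀ c ∈ M, ∀ b ∈ T, c • m b ∈ H := by
  simp only [coeffSpan, AddSubgroup.closure_le, Set.image2_subset_iff, SetLike.mem_coe]

theorem coeffSpan_mono (hM : M ⊆ M') (hT : T ⊆ T') : coeffSpan M m T ≤ coeffSpan M' m T' :=
  AddSubgroup.closure_mono (Set.image2_subset hM hT)

theorem map_mem_of_mem_coeffSpan [AddCommGroup W] {H : AddSubgroup W} (f : V →+ W)
    (hf : ∀ c ∈ M, ∀ b ∈ T, f (c • m b) ∈ H) (hx : x ∈ coeffSpan M m T) : f x ∈ H :=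
  (coeffSpan_le_iff (H := H.comap f)).2 hf hx

theorem smul_mem_coeffSpan_of_mem {S : Type*} [SetLike S K] [MulMemClass S K] {M : S}
    (hc : c ∈ M) (hx : x ∈ coeffSpan (M : Set K) m T) : c • x ∈ coeffSpan (M : Set K) m T :=
  map_mem_of_mem_coeffSpan (DistribSMul.toAddMonoidHom V c)
    (fun d hd b hb => by
      simpa only [DistribSMul.toAddMonoidHom_apply, smul_smul]
        using smul_mem_coeffSpan (mul_mem hc hd) hb) hx

theorem mem_coeffSpan_iff {S : Type*} [SetLike S K] [AddSubgroupClass S K] {M : S} :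
    x ∈ coeffSpan (M : Set K) m T ↔
      ∃ f : ι →₀ K, ↑f.support ⊆ T ∧ (∀ b, f b ∈ M) ∧ Finsupp.linearCombination K m f = x := by
  classical
  constructor
  · intro hx
    induction hx using AddSubgroup.closure_induction with
    | mem x hx =>
      obtain ⟨c, hc, b, hb, rfl⟩ := hx
      refine ⟨Finsupp.single b c, ?_, fun d => ?_, Finsupp.linearCombination_single K c b⟩
      · exact (Finset.coe_subset.2 Finsupp.support_single_subset).trans (by simpa using hb)
      · rw [Finsupp.single_apply]
        split_ifs
        exacts [hc, zero_mem M]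
    | zero => exact ⟨0, by simp, fun _ => zero_mem M, map_zero _⟩
    | add x y _ _ ihx ihy =>
      obtain ⟨f, hfT, hfM, rfl⟩ := ihx
      obtain ⟨g, hgT, hgM, rfl⟩ := ihy
      refine ⟨f + g, ?_, fun b => add_mem (hfM b) (hgM b), map_add _ f g⟩
      exact (Finset.coe_subset.2 Finsupp.support_add).trans (by simp [hfT, hgT])
    | neg x _ ihx =>
      obtain ⟨f, hfT, hfM, rfl⟩ := ihx
      exact ⟨-f, by rwa [Finsupp.support_neg], fun b => neg_mem (hfM b), map_neg _ f⟩
  · rintro ⟨f, hfT, hfM, rfl⟩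
    exact sum_mem fun b hb => smul_mem_coeffSpan (hfM b) (hfT hb)

theorem repr_mem_of_mem_coeffSpan {S : Type*} [SetLike S K] [AddSubgroupClass S K] {M : S}
    (B : Module.Basis ι K V) (hx : x ∈ coeffSpan (M : Set K) B T) (b : ι) : B.repr x b ∈ M := by
  obtain ⟨f, -, hfM, rfl⟩ := mem_coeffSpan_iff.1 hx
  rw [B.repr_linearCombination]
  exact hfM b

theorem support_repr_subset_of_mem_coeffSpan (B : Module.Basis ι K V)
    (hx : x ∈ coeffSpan M B T) : ↑(B.repr x).support ⊆ T := by
  obtain ⟨f, hfT, -, rfl⟩ :=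
    (mem_coeffSpan_iff (M := (⊤ : AddSubgroup K))).1 (coeffSpan_mono (Set.subset_univ M) le_rfl hx)
  rwa [B.repr_linearCombination]

end CoeffSpan

section Unitriangular

variable {K V ι S : Type*} [CommRing K] [AddCommGroup V] [Module K V] [PartialOrder ι]

/-- `B` is obtained from the family `E` by a unitriangular change of families whose off-diagonal
coefficients lie in `M`. -/
def IsUnitriangular (M : Set K) (E B : ι → V) : Prop :=
  ∀ a, B a - E a ∈ coeffSpan M E (Set.Iio a)

namespace IsUnitriangular

theorem mono {M M' : Set K} {E B : ι → V} (h : IsUnitriangular M E B) (hM : M ⊆ M') :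
    IsUnitriangular M' E B :=
  fun a => coeffSpan_mono hM le_rfl (h a)

variable [SetLike S K] [NonUnitalSubringClass S K] {M : S}

theorem coeffSpan_le {E B : ι → V} (h : IsUnitriangular (M : Set K) E B) {T : Set ι}
    (hT : IsLowerSet T) : coeffSpan (M : Set K) B T ≤ coeffSpan (M : Set K) E T := by
  refine coeffSpan_le_iff.2 fun c hc b hb => ?_
  rw [← sub_add_cancel (B b) (E b), smul_add]
  exact add_mem
    (smul_mem_coeffSpan_of_mem hc (coeffSpan_mono le_rfl (fun d hd => hT (le_of_lt hd) hb) (h b)))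
    (smul_mem_coeffSpan hc hb)

theorem symm [WellFoundedLT ι] {E B : ι → V} (h : IsUnitriangular (M : Set K) E B) :
    IsUnitriangular (M : Set K) B E := by
  intro a
  induction a using WellFoundedLT.induction with
  | ind a ih =>
    have hE : coeffSpan (M : Set K) E (Set.Iio a) ≤ coeffSpan (M : Set K) B (Set.Iio a) := by
      refine coeffSpan_le_iff.2 fun c hc b hb => ?_
      rw [← sub_add_cancel (E b) (B b), smul_add]
      exact add_mem
        (smul_mem_coeffSpan_of_mem hc (coeffSpan_mono le_rfl (Set.Iio_subset_Iio hb.le) (ih b hb)))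
        (smul_mem_coeffSpan hc hb)
    rw [← neg_sub]
    exact neg_mem (hE (h a))

end IsUnitriangular

theorem IsUnitriangular.span_eq_top [WellFoundedLT ι] {M : Set K} {E B : ι → V}
    (h : IsUnitriangular M E B) (hE : Submodule.span K (Set.range E) = ⊤) :
    Submodule.span K (Set.range B) = ⊤ := by
  have hEB := (h.mono (Set.subset_univ M)).symm (M := (⊤ : Subring K))
  rw [eq_top_iff, ← hE, Submodule.span_le]
  rintro _ ⟨a, rfl⟩
  have hle : coeffSpan Set.univ B (Set.Iio a) ≤ (Submodule.span K (Set.range B)).toAddSubgroup :=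
    coeffSpan_le_iff.2 fun c _ b _ =>
      Submodule.smul_mem _ c (Submodule.subset_span (Set.mem_range_self b))
  simpa using add_mem (hle (hEB a)) (Submodule.subset_span (Set.mem_range_self a))

theorem IsUnitriangular.repr_eq_zero {M : Set K} {B : ι → V} (E : Module.Basis ι K V)
    (h : IsUnitriangular M E B) {a b : ι} (hab : ¬ b ≤ a) : E.repr (B a) b = 0 := by
  have hsub : E.repr (B a - E a) b = 0 := Finsupp.notMem_support_iff.1 fun hb =>
    hab (support_repr_subset_of_mem_coeffSpan E (h a) hb).le
  have hne : a ≠ b := fun hba => hab hba.ge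
  simpa [Finsupp.single_apply, hne] using hsub

theorem IsUnitriangular.repr_self {M : Set K} {B : ι → V} (E : Module.Basis ι K V)
    (h : IsUnitriangular M E B) (a : ι) : E.repr (B a) a = 1 := by
  have hsub : E.repr (B a - E a) a = 0 := Finsupp.notMem_support_iff.1 fun ha =>
    lt_irrefl a (support_repr_subset_of_mem_coeffSpan E (h a) ha)
  simpa [sub_eq_zero] using hsub

theorem IsUnitriangular.linearIndependent {M : Set K} {B : ι → V} (E : Module.Basis ι K V)
    (h : IsUnitriangular M E B) : LinearIndependent K B := by
  rw [linearIndependent_iff]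
  intro g hg
  by_contra hne
  obtain ⟨a, ha⟩ := g.support.exists_maximal (Finsupp.support_nonempty_iff.2 hne)
  have hcoord : E.repr (Finsupp.linearCombination K B g) a = g a := by
    rw [Finsupp.linearCombination_apply, Finsupp.sum, map_sum, Finsupp.finsetSum_apply,
      Finset.sum_eq_single_of_mem a ha.prop fun b hb hba => ?_]
    · simp [h.repr_self E]
    · simp [h.repr_eq_zero E fun hab => hba (ha.eq_of_ge hb hab)]
  rw [hg, map_zero] at hcoord
  exact Finsupp.mem_support_iff.1 ha.prop hcoord.symm

end Unitriangular

section BarSplitting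

variable {K V ι : Type*} [CommRing K] [AddCommGroup V] [Module K V]

/-- The coefficient condition of Lusztig's lemma: `M` is a part of `L` containing no nonzero
`bar`-invariant, and every `bar`-anti-invariant element of `L` is antisymmetrised from `M`.
The model is `L = ℤ[q, q⁻¹]`, `M = qℤ[q]`, with `bar` exchanging `q` and `q⁻¹`. -/
structure IsBarSplitting (bar : K →+* K) (L : Subring K) (M : NonUnitalSubring K) : Prop where
  subset : (M : Set K) ⊆ L
  eq_zero_of_bar_eq : ∀ f ∈ M, bar f = f → f = 0
  exists_sub_bar_eq : ∀ f ∈ L, bar f = -f → ∃ g ∈ M, g - bar g = f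

variable {bar : K →+* K} {ψ : V →ₛₗ[bar] V} {B : Module.Basis ι K V} {T : Set ι}
  {L : Subring K} {M : NonUnitalSubring K}

theorem repr_semilinear_apply (hB : ∀ b ∈ T, ψ (B b) = B b) {x : V}
    (hx : ↑(B.repr x).support ⊆ T) (b : ι) : B.repr (ψ x) b = bar (B.repr x b) := by
  have hψ : ψ x = Finsupp.linearCombination K B ((B.repr x).mapRange bar (map_zero bar)) := by
    conv_lhs => rw [← B.linearCombination_repr x]
    rw [Finsupp.linearCombination_apply, Finsupp.linearCombination_apply,
      Finsupp.sum_mapRange_index fun c => zero_smul K (B c), map_finsuppSum]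
    exact Finsupp.sum_congr fun c hc => by rw [map_smulₛₗ, hB c (hx hc)]
  rw [hψ, B.repr_linearCombination, Finsupp.mapRange_apply]

theorem IsBarSplitting.eq_zero_of_semilinear_eq (hLM : IsBarSplitting bar L M)
    (hB : ∀ b ∈ T, ψ (B b) = B b) {x : V} (hx : x ∈ coeffSpan (M : Set K) B T) (hψ : ψ x = x) :
    x = 0 := by
  have hsupp := support_repr_subset_of_mem_coeffSpan B hx
  refine B.ext_elem fun b => ?_
  rw [map_zero, Finsupp.zero_apply]
  refine hLM.eq_zero_of_bar_eq _ (repr_mem_of_mem_coeffSpan B hx b) ?_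
  rw [← repr_semilinear_apply hB hsupp, hψ]

theorem IsBarSplitting.exists_sub_semilinear_eq (hLM : IsBarSplitting bar L M)
    (hB : ∀ b ∈ T, ψ (B b) = B b) {y : V} (hy : y ∈ coeffSpan (L : Set K) B T) (hψ : ψ y = -y) :
    ∃ s ∈ coeffSpan (M : Set K) B T, s - ψ s = y := by
  have hsupp := support_repr_subset_of_mem_coeffSpan B hy
  have hanti (b : ι) : bar (B.repr y b) = -B.repr y b := by
    rw [← repr_semilinear_apply hB hsupp, hψ, map_neg, Finsupp.neg_apply]
  choose g hgM hg using fun b =>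
    hLM.exists_sub_bar_eq _ (repr_mem_of_mem_coeffSpan B hy b) (hanti b)
  refine ⟨∑ b ∈ (B.repr y).support, g b • B b,
    sum_mem fun b hb => smul_mem_coeffSpan (hgM b) (hsupp hb), ?_⟩
  conv_rhs => rw [← B.linearCombination_repr y, Finsupp.linearCombination_apply, Finsupp.sum]
  rw [map_sum, ← Finset.sum_sub_distrib]
  refine Finset.sum_congr rfl fun b hb => ?_
  rw [map_smulₛₗ, hB b (hsupp hb), ← sub_smul, hg]

end BarSplitting

section LusztigLemma

variable {K V ι : Type*} [CommRing K] [AddCommGroup V] [Module K V]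
  [PartialOrder ι] [WellFoundedLT ι] {bar : K →+* K} {ψ : V →ₛₗ[bar] V}
  {L : Subring K} {M : NonUnitalSubring K}

theorem IsUnitriangular.coeffSpan_eq {S : Type*} [SetLike S K] [NonUnitalSubringClass S K] {M : S}
    {E B : ι → V} (h : IsUnitriangular (M : Set K) E B) {T : Set ι} (hT : IsLowerSet T) :
    coeffSpan (M : Set K) B T = coeffSpan (M : Set K) E T :=
  le_antisymm (h.coeffSpan_le hT) (h.symm.coeffSpan_le hT)

theorem exists_unitriangular_basis_fixed_below (E : Module.Basis ι K V) (a : ι)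
    (h : ∀ b < a, ∃ x, x - E b ∈ coeffSpan (M : Set K) E (Set.Iio b) ∧ ψ x = x) :
    ∃ B : Module.Basis ι K V, IsUnitriangular (M : Set K) E B ∧ ∀ b ∈ Set.Iio a, ψ (B b) = B b := by
  classical
  choose x hxE hxψ using h
  let B (b : ι) : V := if hb : b < a then x b hb else E b
  have hBE : IsUnitriangular (M : Set K) E B := by
    intro b
    by_cases hb : b < a
    · simpa only [B, dif_pos hb] using hxE b hb
    · simpa only [B, dif_neg hb, sub_self] using zero_mem _
  refine ⟨Module.Basis.mk (hBE.linearIndependent E) (hBE.span_eq_top E.span_eq).ge, ?_, ?_⟩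
  · simpa only [Module.Basis.coe_mk] using hBE
  · intro b hb
    simpa only [Module.Basis.coe_mk, B, dif_pos (Set.mem_Iio.1 hb)] using hxψ b hb

-- The correction `s` of `E a` is found in the basis of invariants already built below `a`.
theorem IsBarSplitting.exists_fixed (hLM : IsBarSplitting bar L M) (E : Module.Basis ι K V) (a : ι)
    (htri : ∀ b ≤ a, ψ (E b) - E b ∈ coeffSpan (L : Set K) E (Set.Iio b))
    (hinv : ∀ b ≤ a, ψ (ψ (E b)) = E b) :
    ∃ x, x - E a ∈ coeffSpan (M : Set K) E (Set.Iio a) ∧ ψ x = x := by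
  induction a using WellFoundedLT.induction with
  | ind a ih =>
    obtain ⟨B, hBE, hBψ⟩ := exists_unitriangular_basis_fixed_below E a fun b hb =>
      ih b hb (fun c hc => htri c (hc.trans hb.le)) (fun c hc => hinv c (hc.trans hb.le))
    have hdefect : ψ (E a) - E a ∈ coeffSpan (L : Set K) B (Set.Iio a) := by
      rw [(hBE.mono hLM.subset).coeffSpan_eq (isLowerSet_Iio a)]
      exact htri a le_rfl
    have hanti : ψ (ψ (E a) - E a) = -(ψ (E a) - E a) := by
      rw [map_sub, hinv a le_rfl, neg_sub]
    obtain ⟨s, hs, hsψ⟩ := hLM.exists_sub_semilinear_eq hBψ hdefect hanti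
    rw [hBE.coeffSpan_eq (isLowerSet_Iio a)] at hs
    refine ⟨E a + s, by rwa [add_sub_cancel_left], ?_⟩
    rw [map_add]
    linear_combination (norm := abel) -hsψ

theorem IsBarSplitting.existsUnique_fixed (hLM : IsBarSplitting bar L M)
    (E : Module.Basis ι K V) (a : ι)
    (htri : ∀ b ≤ a, ψ (E b) - E b ∈ coeffSpan (L : Set K) E (Set.Iio b))
    (hinv : ∀ b ≤ a, ψ (ψ (E b)) = E b) :
    ∃! x, x - E a ∈ coeffSpan (M : Set K) E (Set.Iio a) ∧ ψ x = x := by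
  have hexists (b : ι) (hb : b ≤ a) := hLM.exists_fixed E b
    (fun c hc => htri c (hc.trans hb)) (fun c hc => hinv c (hc.trans hb))
  obtain ⟨B, hBE, hBψ⟩ := exists_unitriangular_basis_fixed_below E a fun b hb => hexists b hb.le
  refine existsUnique_of_exists_of_unique (hexists a le_rfl) ?_
  rintro x y ⟨hxE, hxψ⟩ ⟨hyE, hyψ⟩
  have hxy : x - y ∈ coeffSpan (M : Set K) B (Set.Iio a) := by
    rw [hBE.coeffSpan_eq (isLowerSet_Iio a), ← sub_sub_sub_cancel_right x y (E a)]
    exact sub_mem hxE hyE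
  exact sub_eq_zero.1 (hLM.eq_zero_of_semilinear_eq hBψ hxy (by rw [map_sub, hxψ, hyψ]))

end LusztigLemma

section Laurent

open Polynomial LaurentPolynomial

theorem coeff_toLaurent_X_mul_of_nonpos (p : ℤ[X]) {n : ℤ} (hn : n ≤ 0) :
    (toLaurent (X * p)).coeff n = 0 := by
  rw [← Finsupp.notMem_support_iff, support_coeff_toLaurent, Finset.mem_map]
  rintro ⟨k, hk, rfl⟩
  obtain rfl : k = 0 := by simpa using hn
  exact mem_support_iff.1 hk (coeff_X_mul_zero p)

theorem exists_coeff_toLaurent_X_mul_eq (g : ℤ[T;T⁻¹]) :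
    ∃ p : ℤ[X], ∀ n, (toLaurent (X * p)).coeff n = if 0 < n then g.coeff n else 0 := by
  induction g using LaurentPolynomial.induction_on' with
  | add f g hf hg =>
    obtain ⟨p, hp⟩ := hf
    obtain ⟨r, hr⟩ := hg
    refine ⟨p + r, fun n => ?_⟩
    rw [mul_add, map_add, AddMonoidAlgebra.coeff_add, Finsupp.add_apply, hp, hr,
      AddMonoidAlgebra.coeff_add, Finsupp.add_apply]
    split_ifs
    exacts [rfl, add_zero 0]
  | C_mul_T k c =>
    rw [← single_eq_C_mul_T]
    rcases lt_or_ge 0 k with hk | hk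
    · obtain ⟨m, rfl⟩ : ∃ m : ℕ, k = ((m + 1 : ℕ) : ℤ) := ⟨k.toNat - 1, by omega⟩
      refine ⟨monomial m c, fun n => ?_⟩
      rw [X_mul_monomial, ← C_mul_X_pow_eq_monomial, toLaurent_C_mul_X_pow, ← single_eq_C_mul_T,
        AddMonoidAlgebra.coeff_single, Finsupp.single_apply]
      split_ifs <;> omega
    · refine ⟨0, fun n => ?_⟩
      rw [mul_zero, map_zero, AddMonoidAlgebra.coeff_single, Finsupp.single_apply]
      split_ifs
      exacts [by omega, rfl, rfl]

theorem eq_zero_of_invert_toLaurent_X_mul {p : ℤ[X]}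
    (h : invert (toLaurent (X * p)) = toLaurent (X * p)) : toLaurent (X * p) = 0 := by
  ext n
  rcases le_total n 0 with hn | hn
  · exact coeff_toLaurent_X_mul_of_nonpos p hn
  · rw [← h, invert_apply]
    exact coeff_toLaurent_X_mul_of_nonpos p (neg_nonpos.2 hn)

theorem exists_toLaurent_X_mul_sub_invert {g : ℤ[T;T⁻¹]} (h : invert g = -g) :
    ∃ p : ℤ[X], toLaurent (X * p) - invert (toLaurent (X * p)) = g := by
  obtain ⟨p, hp⟩ := exists_coeff_toLaurent_X_mul_eq g
  refine ⟨p, LaurentPolynomial.ext fun n => ?_⟩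
  have hn : g.coeff (-n) = -g.coeff n := by
    rw [← invert_apply, h, AddMonoidAlgebra.coeff_neg, Finsupp.neg_apply]
  rw [AddMonoidAlgebra.coeff_sub, Finsupp.sub_apply, invert_apply, hp, hp, hn]
  split_ifs with hpos hneg hneg
  · omega
  · exact sub_zero _
  · rw [zero_sub, neg_neg]
  · obtain rfl : n = 0 := by omega
    rw [neg_zero] at hn
    omega

variable {K : Type*} [Field K]

/-- The ring `ℤ[q, q⁻¹]` inside `K`. -/
def laurentSubring (q : K) : Subring K :=
  Subring.closure {q, q⁻¹}

/-- The nonunital ring `qℤ[q]` of polynomials without constant term in `q`. -/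
def positiveSubring (q : K) : NonUnitalSubring K where
  carrier := {f | ∃ p : ℤ[X], q * eval₂ (Int.castRingHom K) q p = f}
  zero_mem' := ⟨0, by rw [eval₂_zero, mul_zero]⟩
  add_mem' := by
    rintro _ _ ⟨p, rfl⟩ ⟨r, rfl⟩
    exact ⟨p + r, by rw [eval₂_add, mul_add]⟩
  neg_mem' := by
    rintro _ ⟨p, rfl⟩
    exact ⟨-p, by rw [eval₂_neg, mul_neg]⟩
  mul_mem' := by
    rintro _ _ ⟨p, rfl⟩ ⟨r, rfl⟩
    exact ⟨X * (p * r), by rw [eval₂_mul, eval₂_mul, eval₂_X]; ring⟩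

theorem mem_laurentSubring_self (q : K) : q ∈ laurentSubring q :=
  Subring.subset_closure (Set.mem_insert _ _)

theorem inv_mem_laurentSubring (q : K) : q⁻¹ ∈ laurentSubring q :=
  Subring.subset_closure (Set.mem_insert_of_mem _ rfl)

theorem zpow_mem_laurentSubring (q : K) (n : ℤ) : q ^ n ∈ laurentSubring q := by
  cases n with
  | ofNat n => simpa using pow_mem (mem_laurentSubring_self q) n
  | negSucc n => simpa using pow_mem (inv_mem_laurentSubring q) (n + 1)

theorem positiveSubring_subset_laurentSubring (q : K) :
    (positiveSubring q : Set K) ⊆ laurentSubring q := by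
  rintro _ ⟨p, rfl⟩
  rw [eval₂_eq_sum_range]
  exact mul_mem (mem_laurentSubring_self q) (sum_mem fun n _ =>
    mul_mem (intCast_mem _ _) (pow_mem (mem_laurentSubring_self q) n))

variable {q : Kˣ}

theorem laurentSubring_le_range_eval₂ :
    laurentSubring (q : K) ≤ (LaurentPolynomial.eval₂ (Int.castRingHom K) q).range := by
  refine Subring.closure_le.2 ?_
  rintro _ (rfl | rfl)
  · exact ⟨T 1, by rw [LaurentPolynomial.eval₂_T, zpow_one]⟩
  · exact ⟨T (-1), by rw [LaurentPolynomial.eval₂_T, zpow_neg_one, Units.val_inv_eq_inv_val]⟩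

theorem eval₂_toLaurent_X_mul (p : ℤ[X]) :
    LaurentPolynomial.eval₂ (Int.castRingHom K) q (toLaurent (X * p))
      = q * Polynomial.eval₂ (Int.castRingHom K) (q : K) p := by
  rw [eval₂_toLaurent, eval₂_mul, eval₂_X]

theorem eval₂_injective_of_transcendental (hq : Transcendental ℤ (q : K)) :
    Function.Injective (LaurentPolynomial.eval₂ (Int.castRingHom K) q) := by
  rw [injective_iff_map_eq_zero]
  intro f hf
  obtain ⟨n, p, hp⟩ := f.exists_T_pow
  have hpq : aeval (q : K) p = 0 := by
    rw [aeval_def, algebraMap_int_eq, ← eval₂_toLaurent, hp, map_mul, hf, zero_mul]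
  rw [transcendental_iff.1 hq p hpq, map_zero, eq_comm] at hp
  exact (isUnit_T n).mul_left_eq_zero.1 hp

theorem map_eval₂_eq_eval₂_invert {bar : K →+* K} (hbar : bar q = (q : K)⁻¹) (f : ℤ[T;T⁻¹]) :
    bar (LaurentPolynomial.eval₂ (Int.castRingHom K) q f)
      = LaurentPolynomial.eval₂ (Int.castRingHom K) q (invert f) := by
  induction f using LaurentPolynomial.induction_on' with
  | add f g hf hg => rw [map_add, map_add, map_add, map_add, hf, hg]
  | C_mul_T n c => simp [hbar]

theorem isBarSplitting_laurentSubring (hq : Transcendental ℤ (q : K)) {bar : K →+* K}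
    (hbar : bar q = (q : K)⁻¹) :
    IsBarSplitting bar (laurentSubring (q : K)) (positiveSubring (q : K)) where
  subset := positiveSubring_subset_laurentSubring (q : K)
  eq_zero_of_bar_eq := by
    rintro _ ⟨p, rfl⟩ hp
    rw [← eval₂_toLaurent_X_mul, map_eval₂_eq_eval₂_invert hbar] at hp
    rw [← eval₂_toLaurent_X_mul, eq_zero_of_invert_toLaurent_X_mul
      (eval₂_injective_of_transcendental hq hp), map_zero]
  exists_sub_bar_eq := by
    intro f hf hanti
    obtain ⟨g, rfl⟩ := laurentSubring_le_range_eval₂ hf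
    rw [map_eval₂_eq_eval₂_invert hbar, ← map_neg] at hanti
    obtain ⟨p, hp⟩ :=
      exists_toLaurent_X_mul_sub_invert (eval₂_injective_of_transcendental hq hanti)
    refine ⟨_, ⟨p, rfl⟩, ?_⟩
    rw [← eval₂_toLaurent_X_mul, map_eval₂_eq_eval₂_invert hbar, ← map_sub, hp]

end Laurent

section QuantumSerre

attribute [local instance] LieRing.ofAssociativeRing

variable {K R : Type*} [Field K] [Ring R] [Algebra K R] {q : K} {x y A D : R}

theorem lie_mul_eq (A x y : R) : ⁅A, x * y⁆ = ⁅A, x⁆ * y + x * ⁅A, y⁆ := by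
  simp only [Ring.lie_def]
  noncomm_ring

theorem lie_smul_eq (t : K) (A x : R) : ⁅A, t • x⁆ = t • ⁅A, x⁆ :=
  lie_smul t A x

/-- The `q`-commutator `yx − q⁻²xy`. -/
def qCommutator (q : K) (x y : R) : R := y * x - (q⁻¹) ^ 2 • (x * y)

/-- The quantized Serre relation for `(x, y)`, cubic in `x`. -/
def QuantumSerre (q : K) (x y : R) : Prop :=
  x ^ 3 * y - (q ^ 2 + 1 + (q⁻¹) ^ 2) • (x ^ 2 * y * x)
    + (q ^ 2 + 1 + (q⁻¹) ^ 2) • (x * y * x ^ 2) - y * x ^ 3 = 0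

theorem lie_qCommutator (q : K) (A x y : R) :
    ⁅A, qCommutator q x y⁆ = qCommutator q ⁅A, x⁆ y + qCommutator q x ⁅A, y⁆ := by
  simp only [qCommutator, lie_sub, lie_smul_eq, lie_mul_eq]
  module

theorem QuantumSerre.lie_qCommutator_mul (hq : q ≠ 0) (h : QuantumSerre q x y) :
    ⁅qCommutator q x y, x⁆ * x = q ^ 2 • (x * ⁅qCommutator q x y, x⁆) := by
  rw [← sub_eq_zero, ← neg_eq_zero, ← h]
  simp only [qCommutator, Ring.lie_def, mul_sub, sub_mul, smul_mul_assoc, mul_smul_comm, smul_smul,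
    mul_assoc, smul_sub, pow_succ, pow_zero, one_mul]
  match_scalars <;> field_simp <;> ring

theorem QuantumSerre.mul_lie_qCommutator (hq : q ≠ 0) (h : QuantumSerre q y x) :
    y * ⁅qCommutator q x y, y⁆ = q ^ 2 • (⁅qCommutator q x y, y⁆ * y) := by
  rw [← sub_eq_zero, ← neg_eq_zero, ← h]
  simp only [qCommutator, Ring.lie_def, mul_sub, sub_mul, smul_mul_assoc, mul_smul_comm, smul_smul,
    mul_assoc, smul_sub, pow_succ, pow_zero, one_mul]
  match_scalars <;> field_simp <;> ring

theorem lie_qCommutator_left_of_mul_eq (hq : q ≠ 0) {v : R} (h : v * x = q ^ 2 • (x * v)) :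
    ⁅qCommutator q v y, x⁆
      = q ^ 2 • (qCommutator q x y * v) - (q⁻¹) ^ 2 • (v * qCommutator q x y) := by
  have hyv : y * (v * x) = q ^ 2 • (y * (x * v)) := by rw [h, mul_smul_comm]
  have hvy : v * (x * y) = q ^ 2 • (x * (v * y)) := by
    rw [← mul_assoc, h, smul_mul_assoc, mul_assoc]
  simp only [qCommutator, Ring.lie_def, mul_sub, sub_mul, smul_mul_assoc, mul_smul_comm, smul_smul,
    mul_assoc, smul_sub]
  linear_combination (norm := skip) (1 : K) • hyv - (q⁻¹) ^ 4 • hvy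
  match_scalars <;> field_simp <;> ring

theorem lie_qCommutator_right_of_mul_eq (hq : q ≠ 0) {w : R} (h : y * w = q ^ 2 • (w * y)) :
    ⁅qCommutator q x w, y⁆
      = (q⁻¹) ^ 2 • (qCommutator q x y * w) - q ^ 2 • (w * qCommutator q x y) := by
  have hwx : y * (w * x) = q ^ 2 • (w * (y * x)) := by
    rw [← mul_assoc, h, smul_mul_assoc, mul_assoc]
  have hxw : x * (y * w) = q ^ 2 • (x * (w * y)) := by rw [h, mul_smul_comm]
  simp only [qCommutator, Ring.lie_def, mul_sub, sub_mul, smul_mul_assoc, mul_smul_comm, smul_smul,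
    mul_assoc, smul_sub]
  linear_combination (norm := skip) (-1 : K) • hwx + (q⁻¹) ^ 4 • hxw
  match_scalars <;> field_simp <;> ring

theorem qCommutator_left_sub (hq : q ≠ 0) (A v y : R) :
    qCommutator q (q ^ 2 • (A * v) - (q⁻¹) ^ 2 • (v * A)) y
      = q ^ 2 • (A * qCommutator q v y) - (q⁻¹) ^ 2 • (qCommutator q v y * A)
        - q ^ 2 • (⁅A, y⁆ * v) + (q⁻¹) ^ 4 • (v * ⁅A, y⁆) := by
  simp only [qCommutator, Ring.lie_def, mul_sub, sub_mul, smul_mul_assoc, mul_smul_comm, smul_smul,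
    mul_assoc, smul_sub]
  match_scalars <;> field_simp <;> ring

theorem qCommutator_right_sub (hq : q ≠ 0) (A x w : R) :
    qCommutator q x (q ^ 2 • (w * A) - (q⁻¹) ^ 2 • (A * w))
      = q ^ 2 • (qCommutator q x w * A) - (q⁻¹) ^ 2 • (A * qCommutator q x w)
        + q ^ 2 • (w * ⁅A, x⁆) - (q⁻¹) ^ 4 • (⁅A, x⁆ * w) := by
  simp only [qCommutator, Ring.lie_def, mul_sub, sub_mul, smul_mul_assoc, mul_smul_comm, smul_smul,
    mul_assoc, smul_sub]
  match_scalars <;> field_simp <;> ring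

theorem qCommutator_lie_left_eq_neg (q : K) (x y : R) :
    qCommutator q ⁅qCommutator q x y, x⁆ y = -qCommutator q x ⁅qCommutator q x y, y⁆ := by
  rw [eq_neg_iff_add_eq_zero, ← lie_qCommutator, lie_self]

-- Expanding `⁅D, A⁆` by the Leibniz rule gives `-(q² + q⁻²)⁅D, A⁆`.
theorem lie_qCommutator_lie_eq_zero (hq : q ≠ 0) (h3 : q ^ 2 + 1 + (q⁻¹) ^ 2 ≠ 0)
    (hxy : QuantumSerre q x y) (hyx : QuantumSerre q y x) :
    ⁅qCommutator q ⁅qCommutator q x y, x⁆ y, qCommutator q x y⁆ = 0 := by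
  have hDx := lie_qCommutator_left_of_mul_eq (y := y) hq (hxy.lie_qCommutator_mul hq)
  have hDy := lie_qCommutator_right_of_mul_eq (x := x) hq (hyx.mul_lie_qCommutator hq)
  have hDD := qCommutator_lie_left_eq_neg q x y
  have hDA := lie_qCommutator q (qCommutator q ⁅qCommutator q x y, x⁆ y) x y
  set A := qCommutator q x y
  set D := qCommutator q ⁅A, x⁆ y
  replace hDD : qCommutator q x ⁅A, y⁆ = -D := by rw [hDD, neg_neg]
  replace hDy : ⁅D, y⁆ = q ^ 2 • (⁅A, y⁆ * A) - (q⁻¹) ^ 2 • (A * ⁅A, y⁆) := by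
    rw [← neg_eq_iff_eq_neg.2 hDD, neg_lie, hDy, neg_sub]
  rw [hDx, hDy, qCommutator_left_sub hq, qCommutator_right_sub hq, hDD] at hDA
  have hself : (q ^ 2 + 1 + (q⁻¹) ^ 2) • ⁅D, A⁆ = 0 := by
    rw [Ring.lie_def] at hDA ⊢
    linear_combination (norm := skip) (1 : K) • hDA
    simp only [mul_neg, neg_mul]
    module
  exact (smul_eq_zero.1 hself).resolve_left h3

/-- The iterated commutator `⁅A, ⁅A, … ⁅A, x⁆⁆⁆` with `i` brackets. -/
def adIter (A x : R) : ℕ → R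
  | 0 => x
  | i + 1 => ⁅A, adIter A x i⁆

theorem adIter_succ (A x : R) (i : ℕ) : adIter A x (i + 1) = ⁅A, adIter A x i⁆ := rfl

theorem adIter_smul (t : K) (A x : R) (i : ℕ) : adIter (t • A) x i = t ^ i • adIter A x i := by
  induction i with
  | zero => rw [pow_zero, one_smul]; rfl
  | succ i ih => rw [adIter_succ, adIter_succ, ih, smul_lie, lie_smul_eq, smul_smul, pow_succ']

theorem adIter_smul_succ_mul_adIter {c : K} (t : K) {i : ℕ}
    (h : adIter A x (i + 1) * adIter A x i = c • (adIter A x i * adIter A x (i + 1))) :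
    adIter (t • A) x (i + 1) * adIter (t • A) x i
      = c • (adIter (t • A) x i * adIter (t • A) x (i + 1)) := by
  simp only [adIter_smul, smul_mul_assoc, mul_smul_comm, h]
  module

theorem lie_adIter_eq {g b : K} (hDA : ⁅D, A⁆ = 0)
    (hDx : ⁅D, x⁆ = g • (A * adIter A x 1) + b • adIter A x 2) (i : ℕ) :
    ⁅D, adIter A x i⁆ = g • (A * adIter A x (i + 1)) + b • adIter A x (i + 2) := by
  induction i with
  | zero => exact hDx
  | succ i ih =>
    rw [adIter_succ, leibniz_lie, hDA, zero_lie, zero_add, ih, lie_add, lie_smul_eq, lie_smul_eq,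
      lie_mul_eq, lie_self, zero_mul, zero_add]
    rfl

theorem mul_adIter_lie_of_mul_eq {c : K} {i : ℕ}
    (h : adIter A x (i + 1) * adIter A x i = c • (adIter A x i * adIter A x (i + 1))) :
    adIter A x (i + 2) * adIter A x i + adIter A x (i + 1) * adIter A x (i + 1)
      = c • (adIter A x (i + 1) * adIter A x (i + 1) + adIter A x i * adIter A x (i + 2)) := by
  simpa only [lie_mul_eq, lie_smul_eq, ← adIter_succ] using congrArg (⁅A, ·⁆) h

-- Apply `⁅A, ·⁆` twice and `⁅D, ·⁆` once to the relation for `i`, then eliminate.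
theorem adIter_mul_step {c g b : K} (hgb : g + 2 * b ≠ 0)
    (hD : ∀ i, ⁅D, adIter A x i⁆ = g • (A * adIter A x (i + 1)) + b • adIter A x (i + 2)) {i : ℕ}
    (h : adIter A x (i + 1) * adIter A x i = c • (adIter A x i * adIter A x (i + 1))) :
    adIter A x (i + 2) * adIter A x (i + 1)
      = c • (adIter A x (i + 1) * adIter A x (i + 2)) := by
  have hA := mul_adIter_lie_of_mul_eq h
  have hAA := congrArg (⁅A, ·⁆) hA
  have hDrel := congrArg (⁅D, ·⁆) h
  have hswap (j : ℕ) (z : R) :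
      adIter A x j * (A * z) = A * (adIter A x j * z) - adIter A x (j + 1) * z := by
    rw [adIter_succ, Ring.lie_def]
    noncomm_ring
  simp only [lie_mul_eq, lie_smul_eq, lie_add, ← adIter_succ] at hAA
  simp only [lie_mul_eq, lie_smul_eq, hD, add_mul, mul_add, smul_mul_assoc, mul_smul_comm, hswap,
    mul_assoc] at hDrel
  have hAmul := congrArg (A * ·) hA
  simp only [mul_add, mul_smul_comm] at hAmul
  have hkey : (g + 2 * b) • (adIter A x (i + 2) * adIter A x (i + 1)
      - c • (adIter A x (i + 1) * adIter A x (i + 2))) = 0 := by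
    linear_combination (norm := module) (-1 : K) • hDrel + g • hAmul + b • hAA
  exact sub_eq_zero.1 ((smul_eq_zero.1 hkey).resolve_left hgb)

theorem adIter_succ_mul_adIter (hq : q ≠ 0) (h3 : q ^ 2 + 1 + (q⁻¹) ^ 2 ≠ 0)
    (h4 : q ^ 2 + (q⁻¹) ^ 2 ≠ 0) (hxy : QuantumSerre q x y) (hyx : QuantumSerre q y x) (i : ℕ) :
    adIter (qCommutator q x y) x (i + 1) * adIter (qCommutator q x y) x i
      = q ^ 2 • (adIter (qCommutator q x y) x i * adIter (qCommutator q x y) x (i + 1)) := by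
  have hDA := lie_qCommutator_lie_eq_zero hq h3 hxy hyx
  have hDx := lie_qCommutator_left_of_mul_eq (y := y) hq (hxy.lie_qCommutator_mul hq)
  set A := qCommutator q x y
  set D := qCommutator q ⁅A, x⁆ y
  replace hDx : ⁅D, x⁆ = (q ^ 2 - (q⁻¹) ^ 2) • (A * adIter A x 1) + (q⁻¹) ^ 2 • adIter A x 2 := by
    rw [hDx]
    simp only [adIter, Ring.lie_def A ⁅A, x⁆]
    module
  induction i with
  | zero => exact hxy.lie_qCommutator_mul hq
  | succ i ih => exact adIter_mul_step (by convert! h4 using 1; ring) (lie_adIter_eq hDA hDx) ih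

/-- The straightening relations expressing `uᵢuⱼ`, `i < j`, in the ordered monomials. -/
structure StraighteningRelations (q : K) (u₀ u₁ u₂ u₃ : R) : Prop where
  mul_zero_one : u₀ * u₁ = (q⁻¹) ^ 2 • (u₁ * u₀)
  mul_one_two : u₁ * u₂ = (q⁻¹) ^ 2 • (u₂ * u₁)
  mul_two_three : u₂ * u₃ = (q⁻¹) ^ 2 • (u₃ * u₂)
  mul_zero_two : u₀ * u₂ = (q⁻¹) ^ 2 • (u₂ * u₀) + ((q⁻¹) ^ 2 - 1) • (u₁ * u₁)
  mul_one_three : u₁ * u₃ = (q⁻¹) ^ 2 • (u₃ * u₁) + ((q⁻¹) ^ 2 - 1) • (u₂ * u₂)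
  mul_zero_three : u₀ * u₃ = (q⁻¹) ^ 2 • (u₃ * u₀) + ((q⁻¹) ^ 4 - 1) • (u₂ * u₁)

theorem adIter_mul_adIter_add_one (hq : q ≠ 0)
    (h : ∀ i, adIter A x (i + 1) * adIter A x i = q ^ 2 • (adIter A x i * adIter A x (i + 1)))
    (i : ℕ) :
    adIter A x i * adIter A x (i + 1) = (q⁻¹) ^ 2 • (adIter A x (i + 1) * adIter A x i) := by
  rw [h, smul_smul, ← mul_pow, inv_mul_cancel₀ hq, one_pow, one_smul]

theorem adIter_mul_adIter_add_two (hq : q ≠ 0)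
    (h : ∀ i, adIter A x (i + 1) * adIter A x i = q ^ 2 • (adIter A x i * adIter A x (i + 1)))
    (i : ℕ) :
    adIter A x i * adIter A x (i + 2) = (q⁻¹) ^ 2 • (adIter A x (i + 2) * adIter A x i)
      + ((q⁻¹) ^ 2 - 1) • (adIter A x (i + 1) * adIter A x (i + 1)) := by
  linear_combination (norm := skip) -(q⁻¹) ^ 2 • mul_adIter_lie_of_mul_eq (h i)
  match_scalars <;> field_simp <;> ring

theorem adIter_mul_adIter_add_three (hq : q ≠ 0)
    (h : ∀ i, adIter A x (i + 1) * adIter A x i = q ^ 2 • (adIter A x i * adIter A x (i + 1)))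
    (i : ℕ) :
    adIter A x i * adIter A x (i + 3) = (q⁻¹) ^ 2 • (adIter A x (i + 3) * adIter A x i)
      + ((q⁻¹) ^ 4 - 1) • (adIter A x (i + 2) * adIter A x (i + 1)) := by
  have hA := congrArg (⁅A, ·⁆) (adIter_mul_adIter_add_two hq h i)
  simp only [lie_add, lie_smul_eq, lie_mul_eq, ← adIter_succ] at hA
  rw [adIter_mul_adIter_add_one hq h (i + 1)] at hA
  linear_combination (norm := module) hA

theorem straighteningRelations_adIter (hq : q ≠ 0)
    (h : ∀ i, adIter A x (i + 1) * adIter A x i = q ^ 2 • (adIter A x i * adIter A x (i + 1)))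
    (c : K) :
    StraighteningRelations q (adIter A x 0) (c • adIter A x 1) (c ^ 2 • adIter A x 2)
      (c ^ 3 • adIter A x 3) := by
  constructor <;> simp only [smul_mul_assoc, mul_smul_comm]
  · rw [adIter_mul_adIter_add_one hq h 0]; module
  · rw [adIter_mul_adIter_add_one hq h 1]; module
  · rw [adIter_mul_adIter_add_one hq h 2]; module
  · rw [adIter_mul_adIter_add_two hq h 0]; module
  · rw [adIter_mul_adIter_add_two hq h 1]; module
  · rw [adIter_mul_adIter_add_three hq h 0]; module

end QuantumSerre

theorem ne_zero_of_transcendental_int {K : Type*} [Field K] {q : K} (hq : Transcendental ℤ q) :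
    q ≠ 0 :=
  fun h => hq (h ▸ isAlgebraic_zero)

theorem mem_coeffSpan_positiveSubring_iff {K V ι : Type*} [Field K] [AddCommGroup V] [Module K V]
    {q : K} {m : ι → V} {T : Set ι} {x : V} :
    x ∈ coeffSpan (positiveSubring q : Set K) m T ↔
      ∃ φ : ι →₀ Polynomial ℤ, ↑φ.support ⊆ T ∧
        x = φ.sum fun b p => (q * Polynomial.eval₂ (Int.castRingHom K) q p) • m b := by
  classical
  constructor
  · rw [mem_coeffSpan_iff]
    rintro ⟨f, hfT, hfM, rfl⟩
    choose p hp using hfM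
    let φ : ι →₀ Polynomial ℤ := Finsupp.onFinset f.support (fun b => if f b = 0 then 0 else p b)
      fun b hb => Finsupp.mem_support_iff.2 fun h => hb (if_pos h)
    refine ⟨φ, (Finset.coe_subset.2 Finsupp.support_onFinset_subset).trans hfT, ?_⟩
    rw [Finsupp.linearCombination_apply, Finsupp.sum, Finsupp.onFinset_sum _ fun b => by simp]
    refine Finset.sum_congr rfl fun b hb => ?_
    rw [if_neg (Finsupp.mem_support_iff.1 hb), hp]
  · rintro ⟨φ, hφ, rfl⟩
    exact sum_mem fun b hb => smul_mem_coeffSpan ⟨φ b, rfl⟩ (hφ hb)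

section LeadingTerm

variable {K V ι : Type*} [Field K] [AddCommGroup V] [Module K V] [PartialOrder ι]

/-- `x = q^k m_a` up to a `ℤ[q, q⁻¹]`-combination of the `m_b` with `b < a`. -/
def HasLeadingTerm (q : K) (m : ι → V) (k : ℤ) (a : ι) (x : V) : Prop :=
  x - q ^ k • m a ∈ coeffSpan (laurentSubring q : Set K) m (Set.Iio a)

variable {q : K} {m : ι → V} {k : ℤ} {a : ι} {x y : V}

theorem hasLeadingTerm_of_eq (h : x = q ^ k • m a) : HasLeadingTerm q m k a x := by
  rw [HasLeadingTerm, h, sub_self]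
  exact zero_mem _

namespace HasLeadingTerm

theorem mem_coeffSpan_Iic (h : HasLeadingTerm q m k a x) :
    x ∈ coeffSpan (laurentSubring q : Set K) m (Set.Iic a) := by
  rw [← sub_add_cancel x (q ^ k • m a)]
  exact add_mem (coeffSpan_mono le_rfl Set.Iio_subset_Iic_self h)
    (smul_mem_coeffSpan (zpow_mem_laurentSubring q k) Set.self_mem_Iic)

theorem add_of_mem (h : HasLeadingTerm q m k a x)
    (hy : y ∈ coeffSpan (laurentSubring q : Set K) m (Set.Iio a)) :
    HasLeadingTerm q m k a (x + y) := by
  rw [HasLeadingTerm, add_sub_right_comm]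
  exact add_mem h hy

theorem zpow_smul (hq : q ≠ 0) (h : HasLeadingTerm q m k a x) (n : ℤ) :
    HasLeadingTerm q m (n + k) a (q ^ n • x) := by
  rw [HasLeadingTerm, zpow_add₀ hq, mul_smul, ← smul_sub]
  exact smul_mem_coeffSpan_of_mem (zpow_mem_laurentSubring q n) h

theorem rescale (hq : q ≠ 0) (n : ι → ℕ) (h : HasLeadingTerm q m k a x) :
    HasLeadingTerm q (fun b => q ^ n b • m b) (k - n a) a x := by
  rw [HasLeadingTerm, smul_smul, ← zpow_natCast, ← zpow_add₀ hq, sub_add_cancel]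
  refine coeffSpan_le_iff.2 (fun c hc b hb => ?_) h
  have hcb : c • m b = (c * q ^ (-n b : ℤ)) • q ^ n b • m b := by
    rw [smul_smul, mul_assoc, ← zpow_natCast, ← zpow_add₀ hq, neg_add_cancel, zpow_zero, mul_one]
  rw [hcb]
  exact smul_mem_coeffSpan (mul_mem hc (zpow_mem_laurentSubring q _)) hb

end HasLeadingTerm

-- Lusztig's lemma for `ψ = q^{N(a)}σ`, which fixes leading terms because `N` is constant below `a`.
theorem existsUnique_semilinear_eq_zpow_smul [WellFoundedLT ι] (hq : Transcendental ℤ q)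
    {bar : K →+* K} (hbar : bar q = q⁻¹) (E : Module.Basis ι K V) (σ : V →ₛₗ[bar] V) {N : ι → ℤ}
    (hN : ∀ {a b}, b ≤ a → N b = N a) (hσ : ∀ a, HasLeadingTerm q E (-N a) a (σ (E a)))
    (hσσ : ∀ a, σ (σ (E a)) = E a) (a : ι) :
    ∃! x, x - E a ∈ coeffSpan (positiveSubring q : Set K) E (Set.Iio a) ∧
      σ x = q ^ (-N a) • x := by
  have hq0 := ne_zero_of_transcendental_int hq
  let ψ : V →ₛₗ[bar] V := q ^ N a • σ
  have hfixed (x : V) : ψ x = x ↔ σ x = q ^ (-N a) • x := by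
    rw [LinearMap.smul_apply, zpow_neg, eq_inv_smul_iff₀ (zpow_ne_zero _ hq0)]
  simp only [← hfixed]
  refine IsBarSplitting.existsUnique_fixed
    (isBarSplitting_laurentSubring (q := Units.mk0 q hq0) hq hbar) E a (fun b hb => ?_)
    (fun b _ => ?_)
  · have hlead := (hσ b).zpow_smul hq0 (N a)
    rwa [hN hb, add_neg_cancel, HasLeadingTerm, zpow_zero, one_smul] at hlead
  · rw [LinearMap.smul_apply, LinearMap.smul_apply, map_smulₛₗ, hσσ, map_zpow₀, hbar, smul_smul,
      inv_zpow, mul_inv_cancel₀ (zpow_ne_zero _ hq0), one_smul]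

end LeadingTerm

theorem adjoin_toSubmodule_le_of_mul_mem {K R : Type*} [CommSemiring K] [Semiring R] [Algebra K R]
    {s : Set R} {P : Submodule K R} (hone : 1 ∈ P) (hmul : ∀ u ∈ s, ∀ x ∈ P, u * x ∈ P) :
    Subalgebra.toSubmodule (Algebra.adjoin K s) ≤ P := by
  rw [Algebra.adjoin_eq_span, Submodule.span_le]
  intro x hx
  induction hx using Submonoid.closure_induction_left with
  | one => exact hone
  | mul_left u hu x _ ih => exact hmul u hu x ih

section ShiftsLeadingTerm

variable {K R ι : Type*} [Field K] [Ring R] [Algebra K R] [AddCommMonoid ι] [PartialOrder ι]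
  {q : K} {m : ι → R} {u v y z : R} {a b e eu ev ey ez : ι} {k l : ℤ}

/-- Left multiplication by `u` moves the leading term `m_b` to a `q`-power of `m_{b + e}`. -/
def ShiftsLeadingTerm (q : K) (m : ι → R) (e : ι) (u : R) : Prop :=
  ∀ b, ∃ k, HasLeadingTerm q m k (b + e) (u * m b)

theorem ShiftsLeadingTerm.mul_mem_coeffSpan {T T' : Set ι} (h : ShiftsLeadingTerm q m e u)
    (hT : ∀ b ∈ T, Set.Iic (b + e) ⊆ T') {x : R}
    (hx : x ∈ coeffSpan (laurentSubring q : Set K) m T) :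
    u * x ∈ coeffSpan (laurentSubring q : Set K) m T' := by
  refine map_mem_of_mem_coeffSpan (AddMonoidHom.mulLeft u) (fun c hc b hb => ?_) hx
  obtain ⟨k, hk⟩ := h b
  rw [AddMonoidHom.coe_mulLeft, mul_smul_comm]
  exact smul_mem_coeffSpan_of_mem hc (coeffSpan_mono le_rfl (hT b hb) hk.mem_coeffSpan_Iic)

theorem ShiftsLeadingTerm.mul_mem_span (h : ShiftsLeadingTerm q m e u) {x : R}
    (hx : x ∈ Submodule.span K (Set.range m)) : u * x ∈ Submodule.span K (Set.range m) := by
  have hspan : coeffSpan (laurentSubring q : Set K) m Set.univ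
      ≤ (Submodule.span K (Set.range m)).toAddSubgroup :=
    coeffSpan_le_iff.2 fun c _ b _ => Submodule.smul_mem _ c (Submodule.subset_span ⟨b, rfl⟩)
  suffices Submodule.span K (Set.range m)
      ≤ (Submodule.span K (Set.range m)).comap (LinearMap.mulLeft K u) from this hx
  rw [Submodule.span_le]
  rintro _ ⟨b, rfl⟩
  obtain ⟨k, hk⟩ := h b
  exact hspan (coeffSpan_mono le_rfl (Set.subset_univ _) hk.mem_coeffSpan_Iic)

variable [IsOrderedCancelAddMonoid ι]

theorem HasLeadingTerm.mul (hq : q ≠ 0) (hu : ShiftsLeadingTerm q m e u)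
    (hk : HasLeadingTerm q m k (a + e) (u * m a)) {x : R} (hx : HasLeadingTerm q m l a x) :
    HasLeadingTerm q m (l + k) (a + e) (u * x) := by
  have hsplit : u * x = q ^ l • (u * m a) + u * (x - q ^ l • m a) := by
    rw [mul_sub, mul_smul_comm, add_sub_cancel]
  rw [hsplit]
  exact (hk.zpow_smul hq l).add_of_mem
    (hu.mul_mem_coeffSpan (fun b hb => Set.Iic_subset_Iio.2 (add_lt_add_left hb e)) hx)

theorem HasLeadingTerm.map_add (hq : q ≠ 0) {σ : R → R} (hmul : ∀ x y, σ (x * y) = σ y * σ x)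
    {d : ℤ} (hσu : σ u = q ^ d • u) (hm : m (a + e) = m a * u) (hu : ShiftsLeadingTerm q m e u)
    (hk : HasLeadingTerm q m k (a + e) (u * m a)) (ha : HasLeadingTerm q m l a (σ (m a))) :
    HasLeadingTerm q m (d + (l + k)) (a + e) (σ (m (a + e))) := by
  rw [hm, hmul, hσu, smul_mul_assoc]
  exact (HasLeadingTerm.mul hq hu hk ha).zpow_smul hq d

theorem ShiftsLeadingTerm.hasLeadingTerm_mul_of_mul_eq (hq : q ≠ 0) {c : K}
    (hc : c ∈ laurentSubring q) (huv : u * v = (q⁻¹) ^ 2 • (v * u) + c • (y * z))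
    (hv : ShiftsLeadingTerm q m ev v) (hy : ShiftsLeadingTerm q m ey y)
    (hz : ShiftsLeadingTerm q m ez z) (hlt : b + ez + ey < b + ev + eu)
    (hvb : m (b + ev) = v * m b) (hvbu : m (b + eu + ev) = v * m (b + eu))
    (hu : HasLeadingTerm q m k (b + eu) (u * m b)) :
    HasLeadingTerm q m (k - 2) (b + ev + eu) (u * m (b + ev)) := by
  have hstraight : u * m (b + ev) = q ^ (-2 : ℤ) • (v * (u * m b)) + c • (y * (z * m b)) := by
    rw [hvb, ← mul_assoc, huv, zpow_neg, zpow_ofNat, inv_pow]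
    simp only [add_mul, smul_mul_assoc, mul_assoc]
  have hvu : HasLeadingTerm q m (k + 0) (b + eu + ev) (v * (u * m b)) :=
    HasLeadingTerm.mul hq hv (hasLeadingTerm_of_eq (by rw [hvbu, zpow_zero, one_smul])) hu
  obtain ⟨l, hl⟩ := hz b
  rw [add_zero, add_right_comm] at hvu
  rw [hstraight, sub_eq_neg_add]
  refine (hvu.zpow_smul hq _).add_of_mem (smul_mem_coeffSpan_of_mem hc ?_)
  exact hy.mul_mem_coeffSpan
    (fun d hd => Set.Iic_subset_Iio.2 ((add_le_add_left hd ey).trans_lt hlt)) hl.mem_coeffSpan_Iic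

end ShiftsLeadingTerm

section DominanceOrder

theorem tri_refl (a : Idx) : tri a a := ⟨0, 0, by simp⟩

theorem tri_antisymm {a b : Idx} (hab : tri a b) (hba : tri b a) : a = b := by
  obtain ⟨s, r, h⟩ := hab
  obtain ⟨s', r', h'⟩ := hba
  simp only [Prod.ext_iff]
  omega

theorem tri_trans {a b c : Idx} (hab : tri a b) (hbc : tri b c) : tri a c := by
  obtain ⟨s, r, h⟩ := hab
  obtain ⟨s', r', h'⟩ := hbc
  exact ⟨s + s', r + r', by push_cast; omega⟩

theorem tri_add_right_iff {a b : Idx} (e : Idx) : tri (a + e) (b + e) ↔ tri a b := by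
  simp only [tri, Prod.fst_add, Prod.snd_add, Nat.cast_add]
  exact exists₂_congr fun s r => by omega

theorem Nnum_eq_of_tri {a b : Idx} (h : tri a b) : Nnum b = Nnum a := by
  obtain ⟨s, r, h₃, h₂, h₁, h₀⟩ := h
  rw [Nnum, Nnum, h₃, h₂, h₁, h₀]
  ring

/-- The order on exponents opposite to `⊴`, so that `S(a)` is the set of elements below `a`. -/
abbrev dominanceOrder : PartialOrder Idx where
  le b a := tri a b
  lt b a := b ∈ Sset a
  le_refl := tri_refl
  le_trans _ _ _ hcb hba := tri_trans hba hcb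
  le_antisymm _ _ hba hab := tri_antisymm hab hba
  lt_iff_le_not_ge _ a := and_congr_right fun hab =>
    ⟨fun hne hba => hne (tri_antisymm hab hba), fun hba hne => hba (hne ▸ tri_refl a)⟩

theorem wellFoundedLT_dominanceOrder : @WellFoundedLT Idx dominanceOrder.toLT := by
  refine ⟨Subrelation.wf ?_ (measure fun a : Idx => 3 * a.1 + a.2.1).wf⟩
  rintro b a ⟨⟨s, r, h⟩, hne⟩
  change 3 * b.1 + b.2.1 < 3 * a.1 + a.2.1
  simp only [ne_eq, Prod.ext_iff] at hne
  omega

theorem isOrderedCancelAddMonoid_dominanceOrder :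
    @IsOrderedCancelAddMonoid Idx _ dominanceOrder.toPreorder :=
  letI := dominanceOrder.toPreorder
  { add_le_add_left _ _ h e := (tri_add_right_iff e).2 h
    le_of_add_le_add_left e b a h := by
      rw [add_comm e, add_comm e] at h
      exact (tri_add_right_iff e).1 h }

end DominanceOrder

section OrderedMonomials

attribute [local instance] dominanceOrder isOrderedCancelAddMonoid_dominanceOrder

variable {K R : Type*} [Field K] [Ring R] [Algebra K R] {q : K} {u₀ u₁ u₂ u₃ : R}

/-- The ordered monomial `u₃^{a₃}u₂^{a₂}u₁^{a₁}u₀^{a₀}`. -/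
def orderedMonomial (u₀ u₁ u₂ u₃ : R) (a : Idx) : R :=
  u₃ ^ a.1 * u₂ ^ a.2.1 * u₁ ^ a.2.2.1 * u₀ ^ a.2.2.2

/-- `Σ_{i < j} aᵢaⱼ`, the number of interchanges of generators that reverse an ordered monomial. -/
def crossTerms (a : Idx) : ℤ :=
  a.1 * a.2.1 + a.1 * a.2.2.1 + a.1 * a.2.2.2 + a.2.1 * a.2.2.1 + a.2.1 * a.2.2.2
    + a.2.2.1 * a.2.2.2

theorem mul_pow_of_mul_eq (hq : q ≠ 0) {u v : R} (h : u * v = (q⁻¹) ^ 2 • (v * u)) (n : ℕ) :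
    u * v ^ n = q ^ (-2 * n : ℤ) • (v ^ n * u) := by
  induction n with
  | zero => simp
  | succ n ih =>
    have hexp : q ^ (-2 * ((n + 1 : ℕ) : ℤ)) = q ^ (-2 * n : ℤ) * (q⁻¹) ^ 2 := by
      rw [Nat.cast_succ, mul_add_one, zpow_add₀ hq, inv_pow, zpow_neg q 2, zpow_ofNat]
    rw [pow_succ, ← mul_assoc, ih, smul_mul_assoc, mul_assoc, h, mul_smul_comm, smul_smul, hexp,
      mul_assoc]

theorem orderedMonomial_add_three (b : Idx) :
    orderedMonomial u₀ u₁ u₂ u₃ (b + (1, 0, 0, 0)) = u₃ * orderedMonomial u₀ u₁ u₂ u₃ b := by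
  simp [orderedMonomial, pow_succ', mul_assoc]

theorem orderedMonomial_add_two {b : Idx} (hb : b.1 = 0) :
    orderedMonomial u₀ u₁ u₂ u₃ (b + (0, 1, 0, 0)) = u₂ * orderedMonomial u₀ u₁ u₂ u₃ b := by
  simp [orderedMonomial, hb, pow_succ', mul_assoc]

theorem hasLeadingTerm_three_mul (b : Idx) :
    HasLeadingTerm q (orderedMonomial u₀ u₁ u₂ u₃) 0 (b + (1, 0, 0, 0))
      (u₃ * orderedMonomial u₀ u₁ u₂ u₃ b) :=
  hasLeadingTerm_of_eq (by rw [orderedMonomial_add_three, zpow_zero, one_smul])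

theorem shiftsLeadingTerm_three :
    ShiftsLeadingTerm q (orderedMonomial u₀ u₁ u₂ u₃) (1, 0, 0, 0) u₃ :=
  fun b => ⟨_, hasLeadingTerm_three_mul b⟩

namespace StraighteningRelations

theorem hasLeadingTerm_two_mul (h : StraighteningRelations q u₀ u₁ u₂ u₃) (hq : q ≠ 0) (b : Idx) :
    HasLeadingTerm q (orderedMonomial u₀ u₁ u₂ u₃) (-2 * b.1) (b + (0, 1, 0, 0))
      (u₂ * orderedMonomial u₀ u₁ u₂ u₃ b) := by
  refine hasLeadingTerm_of_eq ?_
  simp only [orderedMonomial, ← mul_assoc, mul_pow_of_mul_eq hq h.mul_two_three]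
  simp [pow_succ', mul_assoc]

theorem shiftsLeadingTerm_two (h : StraighteningRelations q u₀ u₁ u₂ u₃) (hq : q ≠ 0) :
    ShiftsLeadingTerm q (orderedMonomial u₀ u₁ u₂ u₃) (0, 1, 0, 0) u₂ :=
  fun b => ⟨_, h.hasLeadingTerm_two_mul hq b⟩

theorem hasLeadingTerm_one_mul (h : StraighteningRelations q u₀ u₁ u₂ u₃) (hq : q ≠ 0) (b : Idx) :
    HasLeadingTerm q (orderedMonomial u₀ u₁ u₂ u₃) (-2 * (b.1 + b.2.1)) (b + (0, 0, 1, 0))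
      (u₁ * orderedMonomial u₀ u₁ u₂ u₃ b) := by
  obtain ⟨b₃, b₂, b₁, b₀⟩ := b
  induction b₃ with
  | zero =>
    refine hasLeadingTerm_of_eq ?_
    simp only [orderedMonomial, ← mul_assoc, pow_zero, one_mul, mul_pow_of_mul_eq hq h.mul_one_two]
    simp [pow_succ', mul_assoc]
  | succ b₃ ih =>
    have hc : (q⁻¹) ^ 2 - 1 ∈ laurentSubring q :=
      sub_mem (pow_mem (inv_mem_laurentSubring q) 2) (one_mem _)
    have h₂ := h.shiftsLeadingTerm_two hq
    convert! ShiftsLeadingTerm.hasLeadingTerm_mul_of_mul_eq hq hc h.mul_one_three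
      shiftsLeadingTerm_three h₂ h₂ ?_ (orderedMonomial_add_three _) (orderedMonomial_add_three _)
      ih using 1
    · push_cast
      ring
    · exact ⟨⟨1, 0, by simp; omega⟩, by simp⟩

theorem shiftsLeadingTerm_one (h : StraighteningRelations q u₀ u₁ u₂ u₃) (hq : q ≠ 0) :
    ShiftsLeadingTerm q (orderedMonomial u₀ u₁ u₂ u₃) (0, 0, 1, 0) u₁ :=
  fun b => ⟨_, h.hasLeadingTerm_one_mul hq b⟩

theorem hasLeadingTerm_zero_mul_of_eq_zero (h : StraighteningRelations q u₀ u₁ u₂ u₃)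
    (hq : q ≠ 0) (b₂ b₁ b₀ : ℕ) :
    HasLeadingTerm q (orderedMonomial u₀ u₁ u₂ u₃) (-2 * (b₂ + b₁)) ((0, b₂, b₁, b₀) + (0, 0, 0, 1))
      (u₀ * orderedMonomial u₀ u₁ u₂ u₃ (0, b₂, b₁, b₀)) := by
  induction b₂ with
  | zero =>
    refine hasLeadingTerm_of_eq ?_
    simp only [orderedMonomial, ← mul_assoc, pow_zero, one_mul, mul_pow_of_mul_eq hq h.mul_zero_one]
    simp [pow_succ', mul_assoc]
  | succ b₂ ih =>
    have hc : (q⁻¹) ^ 2 - 1 ∈ laurentSubring q :=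
      sub_mem (pow_mem (inv_mem_laurentSubring q) 2) (one_mem _)
    have h₁ := h.shiftsLeadingTerm_one hq
    convert! ShiftsLeadingTerm.hasLeadingTerm_mul_of_mul_eq hq hc h.mul_zero_two
      (h.shiftsLeadingTerm_two hq) h₁ h₁ ?_ (orderedMonomial_add_two rfl)
      (orderedMonomial_add_two rfl) ih using 1
    · push_cast
      ring
    · exact ⟨⟨0, 1, by simp; omega⟩, by simp⟩

theorem hasLeadingTerm_zero_mul (h : StraighteningRelations q u₀ u₁ u₂ u₃) (hq : q ≠ 0) (b : Idx) :
    HasLeadingTerm q (orderedMonomial u₀ u₁ u₂ u₃) (-2 * (b.1 + b.2.1 + b.2.2.1))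
      (b + (0, 0, 0, 1)) (u₀ * orderedMonomial u₀ u₁ u₂ u₃ b) := by
  obtain ⟨b₃, b₂, b₁, b₀⟩ := b
  induction b₃ with
  | zero => simpa using h.hasLeadingTerm_zero_mul_of_eq_zero hq b₂ b₁ b₀
  | succ b₃ ih =>
    have hc : (q⁻¹) ^ 4 - 1 ∈ laurentSubring q :=
      sub_mem (pow_mem (inv_mem_laurentSubring q) 4) (one_mem _)
    convert! ShiftsLeadingTerm.hasLeadingTerm_mul_of_mul_eq hq hc h.mul_zero_three
      shiftsLeadingTerm_three (h.shiftsLeadingTerm_two hq) (h.shiftsLeadingTerm_one hq) ?_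
      (orderedMonomial_add_three _) (orderedMonomial_add_three _) ih using 1
    · push_cast
      ring
    · exact ⟨⟨1, 1, by simp; omega⟩, by simp⟩

theorem shiftsLeadingTerm_zero (h : StraighteningRelations q u₀ u₁ u₂ u₃) (hq : q ≠ 0) :
    ShiftsLeadingTerm q (orderedMonomial u₀ u₁ u₂ u₃) (0, 0, 0, 1) u₀ :=
  fun b => ⟨_, h.hasLeadingTerm_zero_mul hq b⟩

theorem span_range_orderedMonomial (h : StraighteningRelations q u₀ u₁ u₂ u₃) (hq : q ≠ 0)
    (hgen : Algebra.adjoin K {u₀, u₁, u₂, u₃} = ⊤) :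
    Submodule.span K (Set.range (orderedMonomial u₀ u₁ u₂ u₃)) = ⊤ := by
  rw [eq_top_iff, ← Algebra.top_toSubmodule, ← hgen]
  refine adjoin_toSubmodule_le_of_mul_mem (Submodule.subset_span ⟨0, by simp [orderedMonomial]⟩) ?_
  rintro u (rfl | rfl | rfl | rfl) x hx
  exacts [(h.shiftsLeadingTerm_zero hq).mul_mem_span hx,
    (h.shiftsLeadingTerm_one hq).mul_mem_span hx, (h.shiftsLeadingTerm_two hq).mul_mem_span hx,
    (shiftsLeadingTerm_three (q := q)).mul_mem_span hx]

variable {σ : R → R} {d₀ d₁ d₂ d₃ : ℤ}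

theorem hasLeadingTerm_map_pow_three_mul_pow_two (h : StraighteningRelations q u₀ u₁ u₂ u₃)
    (hq : q ≠ 0) (hone : σ 1 = 1) (hmul : ∀ x y, σ (x * y) = σ y * σ x)
    (hσ₂ : σ u₂ = q ^ d₂ • u₂) (hσ₃ : σ u₃ = q ^ d₃ • u₃) (a₃ a₂ : ℕ) :
    HasLeadingTerm q (orderedMonomial u₀ u₁ u₂ u₃) (d₃ * a₃ + d₂ * a₂ - 2 * (a₃ * a₂))
      (a₃, a₂, 0, 0) (σ (orderedMonomial u₀ u₁ u₂ u₃ (a₃, a₂, 0, 0))) := by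
  induction a₂ with
  | zero =>
    induction a₃ with
    | zero => exact hasLeadingTerm_of_eq (by simp [orderedMonomial, hone])
    | succ a₃ ih =>
      convert! HasLeadingTerm.map_add (e := (1, 0, 0, 0)) hq hmul hσ₃
        (by simp [orderedMonomial, pow_succ]) shiftsLeadingTerm_three
        (hasLeadingTerm_three_mul _) ih using 1
      push_cast
      ring
  | succ a₂ ih =>
    convert! HasLeadingTerm.map_add (e := (0, 1, 0, 0)) hq hmul hσ₂
      (by simp [orderedMonomial, pow_succ, mul_assoc]) (h.shiftsLeadingTerm_two hq)
      (h.hasLeadingTerm_two_mul hq _) ih using 1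
    push_cast
    ring

theorem hasLeadingTerm_map_orderedMonomial (h : StraighteningRelations q u₀ u₁ u₂ u₃) (hq : q ≠ 0)
    (hone : σ 1 = 1) (hmul : ∀ x y, σ (x * y) = σ y * σ x)
    (hσ₀ : σ u₀ = q ^ d₀ • u₀) (hσ₁ : σ u₁ = q ^ d₁ • u₁) (hσ₂ : σ u₂ = q ^ d₂ • u₂)
    (hσ₃ : σ u₃ = q ^ d₃ • u₃) (a : Idx) :
    HasLeadingTerm q (orderedMonomial u₀ u₁ u₂ u₃)
      (d₃ * a.1 + d₂ * a.2.1 + d₁ * a.2.2.1 + d₀ * a.2.2.2 - 2 * crossTerms a) a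
      (σ (orderedMonomial u₀ u₁ u₂ u₃ a)) := by
  obtain ⟨a₃, a₂, a₁, a₀⟩ := a
  induction a₀ with
  | zero =>
    induction a₁ with
    | zero =>
      simpa [crossTerms] using
        h.hasLeadingTerm_map_pow_three_mul_pow_two hq hone hmul hσ₂ hσ₃ a₃ a₂
    | succ a₁ ih =>
      convert! HasLeadingTerm.map_add (e := (0, 0, 1, 0)) hq hmul hσ₁
        (by simp [orderedMonomial, pow_succ, mul_assoc]) (h.shiftsLeadingTerm_one hq)
        (h.hasLeadingTerm_one_mul hq _) ih using 1
      simp only [crossTerms]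
      push_cast
      ring
  | succ a₀ ih =>
    convert! HasLeadingTerm.map_add (e := (0, 0, 0, 1)) hq hmul hσ₀
      (by simp [orderedMonomial, pow_succ, mul_assoc]) (h.shiftsLeadingTerm_zero hq)
      (h.hasLeadingTerm_zero_mul hq _) ih using 1
    simp only [crossTerms]
    push_cast
    ring

end StraighteningRelations

end OrderedMonomials

section Transcendental

variable {K : Type*} [Field K] {q : K}

theorem sq_add_one_add_inv_sq_ne_zero (hq : Transcendental ℤ q) : q ^ 2 + 1 + (q⁻¹) ^ 2 ≠ 0 := by
  have hmonic : (Polynomial.X ^ 4 + Polynomial.X ^ 2 + 1 : Polynomial ℤ).Monic := by monicity!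
  have hq0 := ne_zero_of_transcendental_int hq
  intro h
  refine hq ⟨_, hmonic.ne_zero, ?_⟩
  field_simp at h
  simpa using by linear_combination h

theorem sq_add_inv_sq_ne_zero (hq : Transcendental ℤ q) : q ^ 2 + (q⁻¹) ^ 2 ≠ 0 := by
  have hmonic : (Polynomial.X ^ 4 + 1 : Polynomial ℤ).Monic := by monicity!
  have hq0 := ne_zero_of_transcendental_int hq
  intro h
  refine hq ⟨_, hmonic.ne_zero, ?_⟩
  field_simp at h
  simpa using by linear_combination h

end Transcendental

-- Instance search would find the `ℤ`-algebra structure of `RatFunc`, which is not reducibly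
-- equal to the one of a general field.
theorem transcendental_qq : @Transcendental ℤ F _ _ (Ring.toIntAlgebra F) qq := by
  rw [Subsingleton.elim (Ring.toIntAlgebra F) (RatFunc.instAlgebraOfPolynomial ℚ ℤ), qq,
    ← RatFunc.algebraMap_X, transcendental_algebraMap_iff (RatFunc.algebraMap_injective ℚ)]
  exact (Polynomial.transcendental_X ℚ).restrictScalars Int.cast_injective

theorem qq_ne_zero : qq ≠ 0 := ne_zero_of_transcendental_int transcendental_qq

theorem quantumSerre_E1_E2 : QuantumSerre qq E1 E2 := by
  have hrel := RingQuot.mkAlgHom_rel F SerreRel.rel1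
  simp only [map_sub, map_add, map_mul, map_pow, map_smul, map_zero] at hrel
  exact hrel

theorem quantumSerre_E2_E1 : QuantumSerre qq E2 E1 := by
  have hrel := RingQuot.mkAlgHom_rel F SerreRel.rel2
  simp only [map_sub, map_add, map_mul, map_pow, map_smul, map_zero] at hrel
  exact hrel

theorem straighteningRelations_u : StraighteningRelations qq u0 u1 u2 u3 := by
  have hv (i : ℕ) : adIter Aelt E1 (i + 1) * adIter Aelt E1 i
      = qq ^ 2 • (adIter Aelt E1 i * adIter Aelt E1 (i + 1)) :=
    adIter_smul_succ_mul_adIter _ (adIter_succ_mul_adIter qq_ne_zero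
      (sq_add_one_add_inv_sq_ne_zero transcendental_qq) (sq_add_inv_sq_ne_zero transcendental_qq)
      quantumSerre_E1_E2 quantumSerre_E2_E1 i)
  have hrel := straighteningRelations_adIter qq_ne_zero hv (((1 - (qq⁻¹) ^ 2)⁻¹) ^ 2)
  simp only [← pow_mul] at hrel
  exact hrel

theorem straighteningRelations_us : StraighteningRelations qq us0 us1 us2 us3 where
  mul_zero_one := Subtype.ext straighteningRelations_u.mul_zero_one
  mul_one_two := Subtype.ext straighteningRelations_u.mul_one_two
  mul_two_three := Subtype.ext straighteningRelations_u.mul_two_three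
  mul_zero_two := Subtype.ext straighteningRelations_u.mul_zero_two
  mul_one_three := Subtype.ext straighteningRelations_u.mul_one_three
  mul_zero_three := Subtype.ext straighteningRelations_u.mul_zero_three

theorem adjoin_us_eq_top : Algebra.adjoin F {us0, us1, us2, us3} = ⊤ := by
  rw [← Algebra.adjoin_adjoin_coe_preimage (R := F) (s := {u0, u1, u2, u3})]
  congr 1
  ext x
  simp only [Set.mem_preimage, Set.mem_insert_iff, Set.mem_singleton_iff, Subtype.ext_iff]
  rfl

theorem span_range_mon : Submodule.span F (Set.range mon) = ⊤ :=
  straighteningRelations_us.span_range_orderedMonomial qq_ne_zero adjoin_us_eq_top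

/-- The dual PBW basis `E[a]` of `S`, obtained by rescaling the PBW monomials. -/
def dualPBWBasis (hPBW : LinearIndependent F mon) : Module.Basis Idx F Sgen :=
  (Module.Basis.mk hPBW span_range_mon.ge).isUnitSMul (w := fun a => qq ^ bexp a)
    fun _ => (pow_ne_zero _ qq_ne_zero).isUnit

theorem coe_dualPBWBasis (hPBW : LinearIndependent F mon) : ⇑(dualPBWBasis hPBW) = Ee := by
  ext1 a
  rw [dualPBWBasis, Module.Basis.isUnitSMul_apply, Module.Basis.mk_apply, Ee]

theorem two_mul_bexp (a : Idx) : 2 * (bexp a : ℤ) =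
    a.1 * (a.1 - 1) + a.2.1 * (a.2.1 - 1) + a.2.2.1 * (a.2.2.1 - 1) + a.2.2.2 * (a.2.2.2 - 1) := by
  have hchoose (n : ℕ) : (n * (n - 1) : ℤ) = 2 * n.choose 2 := by
    qify
    rw [Nat.cast_choose_two]
    ring
  simp only [hchoose, bexp]
  push_cast
  ring

theorem neg_Nnum_eq (a : Idx) :
    -Nnum a = 6 * a.1 + 4 * a.2.1 + 2 * a.2.2.1 + 0 * a.2.2.2 - 2 * crossTerms a - 2 * bexp a := by
  rw [two_mul_bexp, Nnum, crossTerms]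
  ring

namespace SigmaHyp

attribute [local instance] dominanceOrder

variable {bar : F →+* F} {σ : Sgen → Sgen}

/-- `σ` as a semilinear map over `bar`. -/
def toSemilinearMap (hσ : SigmaHyp bar σ) : Sgen →ₛₗ[bar] Sgen where
  toFun := σ
  map_add' := hσ.2.2.1
  map_smul' := hσ.2.2.2.2.1

theorem map_one (hσ : SigmaHyp bar σ) : σ 1 = 1 := by
  obtain ⟨-, hbij, -, hmul, -⟩ := hσ
  obtain ⟨y, hy⟩ := hbij.surjective 1
  have hmul_one := hmul y 1
  rwa [mul_one, hy, mul_one, eq_comm] at hmul_one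

theorem bar_qq_pow (hσ : SigmaHyp bar σ) (n : ℕ) : bar (qq ^ n) = (qq ^ n)⁻¹ := by
  rw [map_pow, hσ.1, inv_pow]

theorem map_map_of_map_eq (hσ : SigmaHyp bar σ) {u : Sgen} {n : ℕ} (hu : σ u = qq ^ n • u) :
    σ (σ u) = u := by
  obtain ⟨-, -, -, -, hsmul, -⟩ := id hσ
  rw [hu, hsmul, hu, hσ.bar_qq_pow, inv_smul_smul₀ (pow_ne_zero n qq_ne_zero)]

theorem map_map_mon (hσ : SigmaHyp bar σ) (a : Idx) : σ (σ (mon a)) = mon a := by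
  obtain ⟨-, -, -, hmul, -, h₀, h₁, h₂, h₃⟩ := id hσ
  let σσ : Sgen →* Sgen :=
    { toFun := fun x => σ (σ x)
      map_one' := by rw [hσ.map_one, hσ.map_one]
      map_mul' := fun x y => by rw [hmul, hmul] }
  have hσσ₀ : σσ us0 = us0 := (congrArg σ h₀).trans h₀
  have hσσ₁ : σσ us1 = us1 := hσ.map_map_of_map_eq h₁
  have hσσ₂ : σσ us2 = us2 := hσ.map_map_of_map_eq h₂
  have hσσ₃ : σσ us3 = us3 := hσ.map_map_of_map_eq h₃
  change σσ (mon a) = mon a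
  simp only [mon, map_mul, map_pow, hσσ₀, hσσ₁, hσσ₂, hσσ₃]

theorem map_Ee (hσ : SigmaHyp bar σ) (a : Idx) : σ (Ee a) = qq ^ (-bexp a : ℤ) • σ (mon a) := by
  obtain ⟨-, -, -, -, hsmul, -⟩ := id hσ
  rw [Ee, hsmul, hσ.bar_qq_pow, zpow_neg, zpow_natCast]

theorem map_map_Ee (hσ : SigmaHyp bar σ) (a : Idx) : σ (σ (Ee a)) = Ee a := by
  obtain ⟨hbar, -, -, -, hsmul, -⟩ := id hσ
  rw [hσ.map_Ee, hsmul, hσ.map_map_mon, map_zpow₀, hbar, inv_zpow', neg_neg, zpow_natCast, Ee]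

theorem hasLeadingTerm_mon (hσ : SigmaHyp bar σ) (a : Idx) :
    HasLeadingTerm qq mon (-Nnum a + 2 * bexp a) a (σ (mon a)) := by
  obtain ⟨-, -, -, hmul, -, h₀, h₁, h₂, h₃⟩ := id hσ
  rw [neg_Nnum_eq, sub_add_cancel]
  exact straighteningRelations_us.hasLeadingTerm_map_orderedMonomial qq_ne_zero hσ.map_one hmul
    (by rw [h₀, zpow_zero, one_smul]) (by rw [h₁]; rfl) (by rw [h₂]; rfl) (by rw [h₃]; rfl) a

theorem hasLeadingTerm_Ee (hσ : SigmaHyp bar σ) (a : Idx) :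
    HasLeadingTerm qq Ee (-Nnum a) a (σ (Ee a)) := by
  rw [hσ.map_Ee]
  convert! ((hσ.hasLeadingTerm_mon a).rescale qq_ne_zero bexp).zpow_smul
    qq_ne_zero (-bexp a) using 1
  ring

end SigmaHyp

section DualCanonicalBasis

attribute [local instance] dominanceOrder

variable {bar : F →+* F} {σ : Sgen → Sgen} {B : Idx → Sgen}

theorem dcb_iff : DCB bar σ B ↔
    ∀ a, B a - Ee a ∈ coeffSpan (positiveSubring qq : Set F) Ee (Sset a) ∧
      σ (B a) = qq ^ (-Nnum a) • B a := by
  simp only [DCB, cond1, mem_coeffSpan_positiveSubring_iff]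

theorem SigmaHyp.existsUnique_sub_mem_and_map_eq (hσ : SigmaHyp bar σ)
    (hPBW : LinearIndependent F mon) (a : Idx) :
    ∃! x, x - Ee a ∈ coeffSpan (positiveSubring qq : Set F) Ee (Sset a) ∧
      σ x = qq ^ (-Nnum a) • x := by
  have hE := coe_dualPBWBasis hPBW
  have := wellFoundedLT_dominanceOrder
  have lusztig := existsUnique_semilinear_eq_zpow_smul (V := Sgen) (N := Nnum)
    transcendental_qq hσ.1 (dualPBWBasis hPBW) hσ.toSemilinearMap Nnum_eq_of_tri
  rw [hE] at lusztig
  exact lusztig hσ.hasLeadingTerm_Ee hσ.map_map_Ee a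

theorem DCB.isUnitriangular (hB : DCB bar σ B) (hPBW : LinearIndependent F mon) :
    IsUnitriangular (positiveSubring qq : Set F) (dualPBWBasis hPBW) B := by
  rw [coe_dualPBWBasis]
  exact fun a => (dcb_iff.1 hB a).1

theorem DCB.linearIndependent (hB : DCB bar σ B) (hPBW : LinearIndependent F mon) :
    LinearIndependent F B :=
  (hB.isUnitriangular hPBW).linearIndependent

theorem DCB.span_range_eq_top (hB : DCB bar σ B) (hPBW : LinearIndependent F mon) :
    Submodule.span F (Set.range B) = ⊤ :=
  have := wellFoundedLT_dominanceOrder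
  (hB.isUnitriangular hPBW).span_eq_top (dualPBWBasis hPBW).span_eq

end DualCanonicalBasis

/-- There exists a unique family `B : ℕ⁴ → S` such that for every `a ∈ ℕ⁴`:
(i) `B[a] − E[a] ∈ Σ_{b ∈ S(a)} qℤ[q]·E[b]`, and (ii) `σ(B[a]) = q^{−N(a)}B[a]`.
Moreover the family `{B[a] : a ∈ ℕ⁴}` is an `F`-basis of `S` (the dual canonical basis). -/
theorem stmt8 (bar : F →+* F) (σ : Sgen → Sgen)
    (hPBW : LinearIndependent F mon) (hσ : SigmaHyp bar σ) :
    (∃! B : Idx → Sgen, DCB bar σ B) ∧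
    ∀ B : Idx → Sgen, DCB bar σ B →
      LinearIndependent F B ∧ Submodule.span F (Set.range B) = (⊤ : Submodule F Sgen) := by
  refine ⟨?_, fun B hB => ⟨hB.linearIndependent hPBW, hB.span_range_eq_top hPBW⟩⟩
  choose B hB hunique using hσ.existsUnique_sub_mem_and_map_eq hPBW
  exact ⟨B, dcb_iff.2 hB, fun B' hB' => funext fun a => hunique a _ (dcb_iff.1 hB' a)⟩
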